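/- (Monotonicity of the family of storage functions.) For all γ₁, γ₂ with −h ≤ γ₁ ≤ γ₂ ≤ h, one has S_{γ₁}(φ) ≤ S_{γ₂}(φ) for every φ ∈ ℝ. -/

import Mathlib

/-- The family of storage functions `S_γ` for the backlash inductor. -/
noncomputable def Sfam (L h γ φ : ℝ) : ℝ :=
  if (h - γ) / 2 < φ then (1 / (2 * L)) * ((φ + γ) ^ 2 - ((h + γ) / 2) ^ 2)
  else if φ < -((h - γ) / 2) then (1 / (2 * L)) * ((φ - γ) ^ 2 - ((h + γ) / 2) ^ 2)
  else 0

/-!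
Let `e = (|φ| - (h - γ) / 2)⁺` be the amount by which `|φ|` exceeds the half-width of the dead zone.
Factoring the difference of squares on either branch gives `S_γ(φ) = e * (e + (h + γ)) / (2 * L)`.
For `-h ≤ γ` both factors are nonnegative, and both are nondecreasing in `γ`.
-/

/-- The distance from the flux `φ` to the dead zone `[-(h - γ) / 2, (h - γ) / 2]` on which `S_γ`
vanishes; it is a genuine distance only for `γ ≤ h`, when this interval is nonempty. -/
noncomputable def deadZoneExcess (h γ φ : ℝ) : ℝ := (|φ| - (h - γ) / 2)⁺

theorem deadZoneExcess_nonneg (h γ φ : ℝ) : 0 ≤ deadZoneExcess h γ φ :=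
  posPart_nonneg _

theorem deadZoneExcess_monotone (h φ : ℝ) : Monotone fun γ ↦ deadZoneExcess h γ φ := by
  intro γ₁ γ₂ hγ
  apply posPart_mono
  linarith

theorem deadZoneExcess_of_abs_le {h γ φ : ℝ} (hφ : |φ| ≤ (h - γ) / 2) :
    deadZoneExcess h γ φ = 0 :=
  posPart_eq_zero.2 (sub_nonpos.2 hφ)

theorem deadZoneExcess_of_lt_abs {h γ φ : ℝ} (hφ : (h - γ) / 2 < |φ|) :
    deadZoneExcess h γ φ = |φ| - (h - γ) / 2 :=
  posPart_of_nonneg (sub_nonneg.2 hφ.le)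

theorem Sfam_of_abs_le (L : ℝ) {h γ φ : ℝ} (hφ : |φ| ≤ (h - γ) / 2) : Sfam L h γ φ = 0 := by
  obtain ⟨hlower, hupper⟩ := abs_le.1 hφ
  rw [Sfam, if_neg hupper.not_gt, if_neg hlower.not_gt]

theorem Sfam_of_lt_abs (L : ℝ) {h γ φ : ℝ} (hγ : γ ≤ h) (hφ : (h - γ) / 2 < |φ|) :
    Sfam L h γ φ = 1 / (2 * L) * ((|φ| + γ) ^ 2 - ((h + γ) / 2) ^ 2) := by
  obtain hφ_nonneg | hφ_neg := le_or_gt 0 φ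
  · rw [abs_of_nonneg hφ_nonneg] at hφ ⊢
    rw [Sfam, if_pos hφ]
  · rw [abs_of_neg hφ_neg] at hφ ⊢
    have not_upper : ¬(h - γ) / 2 < φ := by linarith
    rw [Sfam, if_neg not_upper, if_pos (lt_neg.1 hφ)]
    ring

theorem Sfam_eq_deadZoneExcess_mul (L φ : ℝ) {h γ : ℝ} (hγ : γ ≤ h) :
    Sfam L h γ φ =
      1 / (2 * L) * (deadZoneExcess h γ φ * (deadZoneExcess h γ φ + (h + γ))) := by
  obtain hφ | hφ := le_or_gt |φ| ((h - γ) / 2)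
  · rw [Sfam_of_abs_le L hφ, deadZoneExcess_of_abs_le hφ, zero_mul, mul_zero]
  · rw [Sfam_of_lt_abs L hγ hφ, deadZoneExcess_of_lt_abs hφ]
    ring

theorem stmt2 (L h : ℝ) (hL : 0 < L) (hh : 0 ≤ h) :
    ∀ γ₁ γ₂ : ℝ, -h ≤ γ₁ → γ₁ ≤ γ₂ → γ₂ ≤ h →
      ∀ φ : ℝ, Sfam L h γ₁ φ ≤ Sfam L h γ₂ φ := by
  intro γ₁ γ₂ hγ₁ hγ hγ₂ φ
  have excess_le : deadZoneExcess h γ₁ φ ≤ deadZoneExcess h γ₂ φ :=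
    deadZoneExcess_monotone h φ hγ
  have excess_nonneg := deadZoneExcess_nonneg h
  have second_factor_nonneg : 0 ≤ deadZoneExcess h γ₁ φ + (h + γ₁) :=
    add_nonneg (excess_nonneg γ₁ φ) (neg_le_iff_add_nonneg'.1 hγ₁)
  rw [Sfam_eq_deadZoneExcess_mul L φ (hγ.trans hγ₂), Sfam_eq_deadZoneExcess_mul L φ hγ₂]
  gcongr
  exact excess_nonneg γ₂ φ
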